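/- arXiv:1404.6487 — 2 statements merged into one kernel-verified Lean document; each statement's English description precedes it below -/
import Mathlib

section
/- Let (X,d) be a metric space, let α : ℕ → X have dense range, let A₁,…,A_n be compact nonempty subsets of X, and let ε > 0. Then there exist finite families F₁,…,F_n, where each F_p is a nonempty finite set of pairs (x,r) with x in the range of α and r a positive rational number with r < ε, such that: (a) for each p, A_p ⊆ ⋃_{(x,r)∈F_p} B(x,r) and B(x,r) ∩ A_p ≠ ∅ for every (x,r) ∈ F_p; and (b) for all p,q ∈ {1,…,n} with A_p ∩ A_q = ∅ and all (x,r) ∈ F_p, (y,s) ∈ F_q, one has d(x,y) > r + s. -/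
open Metric Set

/-!
Every ball may be given the same rational radius `r`. If two balls of radius `r` meet sets at
distance at least `4 * r`, then by the triangle inequality their centers are more than `2 * r`
apart. Disjoint compact sets are a positive distance apart, so finitely many pairs of them allow
a common `r`, and covering each set by balls of that radius, discarding those that miss it, is
enough.
-/

open Filter Topology

theorem exists_rat_of_eventually_nhdsGT {p : ℝ → Prop} {a : ℝ} (h : ∀ᶠ r in 𝓝[>] a, p r) :
    ∃ q : ℚ, a < q ∧ p q := by
  obtain ⟨u, hau, hu⟩ := mem_nhdsGT_iff_exists_Ioo_subset.1 h
  obtain ⟨q, haq, hqu⟩ := exists_rat_btwn (mem_Ioi.1 hau)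
  exact ⟨q, haq, hu ⟨haq, hqu⟩⟩

section PseudoMetricSpace

variable {X : Type*} [PseudoMetricSpace X] {S T D : Set X} {r s : ℝ}

theorem exists_finite_cover_balls_inter_nonempty (hS : TotallyBounded S) (hD : Dense D)
    (hr : 0 < r) :
    ∃ t ⊆ D, t.Finite ∧ S ⊆ ⋃ x ∈ t, ball x r ∧ ∀ x ∈ t, (ball x r ∩ S).Nonempty := by
  obtain ⟨c, hcS, hc, hSc⟩ := finite_approx_of_totallyBounded hS (r / 2) (half_pos hr)
  choose f hfD hf using fun y => hD.exists_dist_lt y (half_pos hr)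
  refine ⟨f '' c, image_subset_iff.2 fun y _ => hfD y, hc.image f, ?_, ?_⟩
  · rw [biUnion_image]
    refine hSc.trans (iUnion₂_mono fun y _ => ball_subset_ball' ?_)
    linarith [hf y]
  · rintro _ ⟨y, hy, rfl⟩
    exact ⟨y, (hf y).trans (half_lt_self hr), hcS hy⟩

theorem add_lt_dist_of_mem_ball {a b x y : X} (ha : a ∈ ball x r) (hb : b ∈ ball y s)
    (hab : 2 * (r + s) ≤ dist a b) : r + s < dist x y := by
  have := dist_triangle4_right a b x y
  rw [mem_ball] at ha hb
  linarith

theorem exists_pos_forall_le_dist_of_areSeparated (h : AreSeparated S T) :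
    ∃ δ : ℝ, 0 < δ ∧ ∀ a ∈ S, ∀ b ∈ T, δ ≤ dist a b := by
  obtain ⟨ρ, hρ, hST⟩ := h
  obtain ⟨δ, hδ, hδρ⟩ := ENNReal.lt_iff_exists_nnreal_btwn.1 (pos_iff_ne_zero.2 hρ)
  refine ⟨δ, NNReal.coe_pos.2 (ENNReal.coe_pos.1 hδ), fun a ha b hb => ?_⟩
  have hab : (δ : ENNReal) ≤ edist a b := hδρ.le.trans (hST a ha b hb)
  rwa [edist_nndist, ENNReal.coe_le_coe, ← NNReal.coe_le_coe, coe_nndist] at hab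

theorem eventually_forall_add_lt_dist_of_areSeparated (h : AreSeparated S T) :
    ∀ᶠ r : ℝ in 𝓝[>] 0, ∀ x y, (ball x r ∩ S).Nonempty → (ball y r ∩ T).Nonempty →
      r + r < dist x y := by
  obtain ⟨δ, hδ, hST⟩ := exists_pos_forall_le_dist_of_areSeparated h
  filter_upwards [Ioo_mem_nhdsGT (by positivity : 0 < δ / 4)]
  rintro r ⟨-, hrδ⟩ x y ⟨a, hax, ha⟩ ⟨b, hby, hb⟩
  exact add_lt_dist_of_mem_ball hax hby (by linarith [hST a ha b hb])

theorem effective_links_general {ι : Type*} [Finite ι] (hD : Dense D) (A : ι → Set X)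
    (hA : ∀ p, TotallyBounded (A p)) (hAne : ∀ p, (A p).Nonempty) (ε : ℝ) (hε : 0 < ε) :
    ∃ F : ι → Set (X × ℚ),
      (∀ p, (F p).Finite ∧ (F p).Nonempty) ∧
      (∀ p, ∀ pr ∈ F p, pr.1 ∈ D ∧ 0 < pr.2 ∧ (pr.2 : ℝ) < ε) ∧
      (∀ p, A p ⊆ ⋃ pr ∈ F p, ball pr.1 (pr.2 : ℝ)) ∧
      (∀ p, ∀ pr ∈ F p, (ball pr.1 (pr.2 : ℝ) ∩ A p).Nonempty) ∧
      (∀ p q, AreSeparated (A p) (A q) → ∀ pr ∈ F p, ∀ qr ∈ F q,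
        (pr.2 : ℝ) + (qr.2 : ℝ) < dist pr.1 qr.1) := by
  have hsmall : ∀ᶠ r : ℝ in 𝓝[>] 0, r < ε ∧ ∀ p q, AreSeparated (A p) (A q) →
      ∀ x y, (ball x r ∩ A p).Nonempty → (ball y r ∩ A q).Nonempty → r + r < dist x y := by
    simp only [eventually_and, eventually_all]
    exact ⟨eventually_nhdsWithin_of_eventually_nhds (eventually_lt_nhds hε),
      fun _ _ => eventually_forall_add_lt_dist_of_areSeparated⟩
  obtain ⟨r, hr, hrε, hsep⟩ := exists_rat_of_eventually_nhdsGT hsmall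
  choose t htD htf hcov hmeet using
    fun p => exists_finite_cover_balls_inter_nonempty (hA p) hD hr
  have htne (p) : (t p).Nonempty :=
    (nonempty_biUnion.1 ((hAne p).mono (hcov p))).imp fun _ h => h.1
  refine ⟨fun p => (·, r) '' t p, fun p => ⟨(htf p).image _, (htne p).image _⟩, ?_, ?_, ?_, ?_⟩
  · rintro p _ ⟨x, hx, rfl⟩
    exact ⟨htD p hx, Rat.cast_pos.1 hr, hrε⟩
  · intro p
    rw [biUnion_image]
    exact hcov p
  · rintro p _ ⟨x, hx, rfl⟩
    exact hmeet p x hx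
  · rintro p q hpq _ ⟨x, hx, rfl⟩ _ ⟨y, hy, rfl⟩
    exact hsep p q hpq x y (hmeet p x hx) (hmeet q y hy)

end PseudoMetricSpace

theorem areSeparated_of_isCompact_of_isClosed {X : Type*} [PseudoEMetricSpace X] {S T : Set X}
    (hS : IsCompact S) (hT : IsClosed T) (hST : Disjoint S T) : AreSeparated S T := by
  obtain ⟨ρ, hρ, h⟩ := exists_pos_forall_lt_edist hS hT hST
  exact ⟨ρ, (ENNReal.coe_pos.2 hρ).ne', fun a ha b hb => (h a ha b hb).le⟩

/-- **Lemma (effective links).** Given compact nonempty sets `A₁, …, A_n` and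
`ε > 0`, there are finite nonempty families `F₁, …, F_n` of rational balls with
radii `< ε` centered at points of the dense sequence such that `F_p` covers `A_p`,
every ball of `F_p` meets `A_p`, and balls of `F_p` and `F_q` are formally
disjoint whenever `A_p ∩ A_q = ∅`. -/
theorem effective_links {X : Type*} [MetricSpace X] (α : ℕ → X)
    (hα : DenseRange α) (n : ℕ) (A : Fin n → Set X)
    (hA : ∀ p, IsCompact (A p)) (hAne : ∀ p, (A p).Nonempty)
    (ε : ℝ) (hε : 0 < ε) :
    ∃ F : Fin n → Set (X × ℚ),
      (∀ p, (F p).Finite ∧ (F p).Nonempty) ∧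
      (∀ p, ∀ pr ∈ F p, pr.1 ∈ range α ∧ 0 < pr.2 ∧ (pr.2 : ℝ) < ε) ∧
      (∀ p, A p ⊆ ⋃ pr ∈ F p, ball pr.1 ((pr.2 : ℝ))) ∧
      (∀ p, ∀ pr ∈ F p, (ball pr.1 ((pr.2 : ℝ)) ∩ A p).Nonempty) ∧
      (∀ p q, A p ∩ A q = ∅ → ∀ pr ∈ F p, ∀ qr ∈ F q,
        dist pr.1 qr.1 > (pr.2 : ℝ) + (qr.2 : ℝ)) := by
  obtain ⟨F, hF, hFε, hcov, hmeet, hsep⟩ :=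
    effective_links_general hα A (fun p => (hA p).totallyBounded) hAne ε hε
  exact ⟨F, hF, hFε, hcov, hmeet, fun p q hpq => hsep p q <| areSeparated_of_isCompact_of_isClosed
    (hA p) (hA q).isClosed (disjoint_iff_inter_eq_empty.2 hpq)⟩
end

section
/- Let (X,d) be a metric space, let α : ℕ → X have dense range, let r > 0, let f : [0,r] → X be a continuous injection, and let ε > 0. Then there exists n₀ ∈ ℕ, n₀ ≥ 1, such that for each n ≥ n₀ there exist nonempty finite families F₀,…,F_{n−1} of pairs (x,ρ), with x in the range of α and ρ a positive rational number, such that: (1) for each i ∈ {0,…,n−1}, f([ (i/n)r, ((i+1)/n)r ]) ⊆ ⋃_{(x,ρ)∈F_i} B(x,ρ), and for every (x,ρ) ∈ F_i one has ρ < ε and B(x,ρ) ∩ f([ (i/n)r, ((i+1)/n)r ]) ≠ ∅; (2) for all i,i' ∈ {0,…,n−1} with |i−i'| > 1 and all (x,ρ) ∈ F_i, (y,σ) ∈ F_{i'}, one has d(x,y) > ρ + σ; (3) for each i ∈ {0,…,n−1}, the formal diameter of F_i, namely max_{(x,ρ),(y,σ)∈F_i} d(x,y) + 2·max_{(x,ρ)∈F_i}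 ρ, is less than ε. -/
open Metric Set

/-! By compactness, `f` is uniformly continuous and, being injective, keeps points of `[0,r]` at
distance at least `c` uniformly apart, for each `c > 0`. Once the mesh `r / n` is small, every piece
of the arc has diameter at most `ε / 2`, while non-neighbouring pieces, whose parameters differ by
at least `r / n`, lie at a positive distance `η` from each other. Covering each piece by balls of
one common rational radius, small compared with both `ε` and `η`, changes these distances too little
to spoil either estimate. -/

section Balls

variable {X : Type*} [PseudoMetricSpace X]

lemma exists_finite_ball_cover_of_subset_closure {D K : Set X} (hK : IsCompact K)
    (hKD : K ⊆ closure D) {ρ : ℝ} (hρ : 0 < ρ) :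
    ∃ T ⊆ D, T.Finite ∧ (∀ x ∈ T, (ball x ρ ∩ K).Nonempty) ∧ K ⊆ ⋃ x ∈ T, ball x ρ := by
  have hcover : K ⊆ ⋃ x ∈ {x ∈ D | (ball x ρ ∩ K).Nonempty}, ball x ρ := by
    intro y hy
    obtain ⟨x, hxD, hyx⟩ := Metric.mem_closure_iff.1 (hKD hy) ρ hρ
    exact mem_biUnion ⟨hxD, y, hyx, hy⟩ hyx
  obtain ⟨T, hT, hfin, hKT⟩ := hK.elim_finite_subcover_image (fun _ _ => isOpen_ball) hcover
  exact ⟨T, fun x hx => (hT hx).1, hfin, fun x hx => (hT hx).2, hKT⟩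

lemma dist_lt_of_ball_inter_nonempty {A B : Set X} {x y : X} {ρ σ c : ℝ}
    (hxA : (ball x ρ ∩ A).Nonempty) (hyB : (ball y σ ∩ B).Nonempty)
    (hAB : ∀ a ∈ A, ∀ b ∈ B, dist a b ≤ c) : dist x y < ρ + c + σ := by
  obtain ⟨a, hax, haA⟩ := hxA
  obtain ⟨b, hby, hbB⟩ := hyB
  calc dist x y ≤ dist x a + dist a b + dist b y := dist_triangle4 x a b y
    _ < ρ + c + σ := add_lt_add (add_lt_add_of_lt_of_le (mem_ball'.1 hax) (hAB a haA b hbB)) hby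

lemma lt_dist_of_ball_inter_nonempty {A B : Set X} {x y : X} {ρ σ η : ℝ}
    (hxA : (ball x ρ ∩ A).Nonempty) (hyB : (ball y σ ∩ B).Nonempty)
    (hAB : ∀ a ∈ A, ∀ b ∈ B, η ≤ dist a b) : η - (ρ + σ) < dist x y := by
  obtain ⟨a, hax, haA⟩ := hxA
  obtain ⟨b, hby, hbB⟩ := hyB
  have htriangle := dist_triangle4 a x y b
  linarith [hAB a haA b hbB, mem_ball.1 hax, mem_ball'.1 hby]

theorem exists_formal_ball_covers {κ : Type*} {D : Set X} {K : κ → Set X}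
    (hK : ∀ i, IsCompact (K i)) (hKne : ∀ i, (K i).Nonempty) (hKD : ∀ i, K i ⊆ closure D)
    {R : κ → κ → Prop} {η : ℝ} (hη : 0 < η)
    (hsep : ∀ i j, R i j → ∀ a ∈ K i, ∀ b ∈ K j, η ≤ dist a b)
    {c ε : ℝ} (hcε : c < ε) (hdiam : ∀ i, ∀ a ∈ K i, ∀ b ∈ K i, dist a b ≤ c) :
    ∃ F : κ → Set (X × ℚ),
      (∀ i, (F i).Finite ∧ (F i).Nonempty) ∧
      (∀ i, ∀ p ∈ F i, p.1 ∈ D ∧ 0 < p.2 ∧ (p.2 : ℝ) < ε ∧ (ball p.1 (p.2 : ℝ) ∩ K i).Nonempty) ∧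
      (∀ i, K i ⊆ ⋃ p ∈ F i, ball p.1 (p.2 : ℝ)) ∧
      (∀ i j, R i j → ∀ p ∈ F i, ∀ p' ∈ F j, (p.2 : ℝ) + (p'.2 : ℝ) < dist p.1 p'.1) ∧
      (∀ i, ∀ p ∈ F i, ∀ p' ∈ F i, ∀ p'' ∈ F i, dist p.1 p'.1 + 2 * (p''.2 : ℝ) < ε) := by
  obtain ⟨q, hq0, hq⟩ := exists_rat_btwn
    (show (0 : ℝ) < min (η / 4) ((ε - c) / 4) from lt_min (by linarith) (by linarith))
  obtain ⟨hqη, hqε⟩ := lt_min_iff.1 hq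
  choose T hTD hTfin hTmeet hTcover using fun i =>
    exists_finite_ball_cover_of_subset_closure (hK i) (hKD i) hq0
  have hTne (i : κ) : (T i).Nonempty := by
    obtain ⟨a, ha⟩ := hKne i
    obtain ⟨x, hx, -⟩ := mem_iUnion₂.1 (hTcover i ha)
    exact ⟨x, hx⟩
  have hTdiam (i : κ) : ∀ x ∈ T i, ∀ y ∈ T i, dist x y + 2 * (q : ℝ) < ε := fun x hx y hy => by
    linarith [dist_lt_of_ball_inter_nonempty (hTmeet i x hx) (hTmeet i y hy) (hdiam i)]
  refine ⟨fun i => (·, q) '' T i, fun i => ⟨(hTfin i).image _, (hTne i).image _⟩, ?_, ?_, ?_, ?_⟩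
  · rintro i _ ⟨x, hx, rfl⟩
    have hqlt : (q : ℝ) < ε := by linarith [hTdiam i x hx x hx, dist_self x]
    exact ⟨hTD i hx, Rat.cast_pos.1 hq0, hqlt, hTmeet i x hx⟩
  · intro i
    simpa only [biUnion_image] using hTcover i
  · rintro i j hij _ ⟨x, hx, rfl⟩ _ ⟨y, hy, rfl⟩
    dsimp only
    linarith [lt_dist_of_ball_inter_nonempty (hTmeet i x hx) (hTmeet j y hy) (hsep i j hij)]
  · rintro i _ ⟨x, hx, rfl⟩ _ ⟨y, hy, rfl⟩ _ ⟨_, -, rfl⟩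
    exact hTdiam i x hx y hy

end Balls

lemma exists_pos_le_dist_of_injOn {X Y : Type*} [PseudoMetricSpace Y] [MetricSpace X]
    {f : Y → X} {K : Set Y} (hK : IsCompact K) (hf : ContinuousOn f K) (hinj : InjOn f K)
    {c : ℝ} (hc : 0 < c) :
    ∃ η > 0, ∀ s ∈ K, ∀ t ∈ K, c ≤ dist s t → η ≤ dist (f s) (f t) := by
  have hfar : IsCompact ((K ×ˢ K) ∩ {p : Y × Y | c ≤ dist p.1 p.2}) :=
    (hK.prod hK).inter_right (isClosed_le continuous_const continuous_dist)
  have hcont : ContinuousOn (fun p : Y × Y => dist (f p.1) (f p.2))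
      ((K ×ˢ K) ∩ {p : Y × Y | c ≤ dist p.1 p.2}) :=
    continuous_dist.comp_continuousOn
      ((hf.comp continuousOn_fst fun _ hp => hp.1.1).prodMk
        (hf.comp continuousOn_snd fun _ hp => hp.1.2))
  have hpos : ∀ p ∈ (K ×ˢ K) ∩ {p : Y × Y | c ≤ dist p.1 p.2}, 0 < dist (f p.1) (f p.2) := by
    rintro ⟨s, t⟩ ⟨⟨hs, ht⟩, hst⟩
    have hne : s ≠ t := by
      rintro rfl
      exact hc.not_ge (hst.trans_eq (dist_self s))
    exact dist_pos.2 (hinj.ne hs ht hne)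
  obtain ⟨η, hη, hle⟩ := hfar.exists_forall_le' hcont hpos
  exact ⟨η, hη, fun s hs t ht hst => hle (s, t) ⟨⟨hs, ht⟩, hst⟩⟩

/-- The `i`-th piece `[(i/n)r, ((i+1)/n)r]` of the subdivision of `[0,r]` into `n` intervals of
equal length, counted from `0`. -/
def subdivisionPiece (r : ℝ) (n i : ℕ) : Set ℝ :=
  Icc ((i : ℝ) / n * r) (((i : ℝ) + 1) / n * r)

namespace subdivisionPiece

variable {r : ℝ} {n i j : ℕ} {s t : ℝ}

lemma nonempty (hr : 0 ≤ r) : (subdivisionPiece r n i).Nonempty :=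
  nonempty_Icc.2 (by gcongr; linarith)

lemma subset_Icc (hr : 0 ≤ r) (hi : i < n) : subdivisionPiece r n i ⊆ Icc 0 r := by
  have hle_one : ((i : ℝ) + 1) / n ≤ 1 := div_le_one_of_le₀ (by exact_mod_cast hi) n.cast_nonneg
  exact Icc_subset_Icc (by positivity) (mul_le_of_le_one_left hr hle_one)

lemma dist_le (hs : s ∈ subdivisionPiece r n i) (ht : t ∈ subdivisionPiece r n i) :
    dist s t ≤ r / n :=
  calc dist s t ≤ ((i : ℝ) + 1) / n * r - (i : ℝ) / n * r := Real.dist_le_of_mem_Icc hs ht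
    _ = r / n := by ring

lemma le_dist (hr : 0 ≤ r) (hij : i + 1 < j) (hs : s ∈ subdivisionPiece r n i)
    (ht : t ∈ subdivisionPiece r n j) : r / n ≤ dist s t := by
  have hij' : (i : ℝ) + 1 + 1 ≤ j := by exact_mod_cast hij
  calc r / n = ((i : ℝ) + 1 + 1) / n * r - ((i : ℝ) + 1) / n * r := by ring
    _ ≤ (j : ℝ) / n * r - ((i : ℝ) + 1) / n * r := by gcongr
    _ ≤ t - s := sub_le_sub ht.1 hs.2
    _ ≤ dist s t := (le_abs_self _).trans_eq (dist_comm t s)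

end subdivisionPiece

lemma exists_one_le_forall_div_lt (r : ℝ) {δ : ℝ} (hδ : 0 < δ) :
    ∃ n₀ : ℕ, 1 ≤ n₀ ∧ ∀ n : ℕ, n₀ ≤ n → r / n < δ := by
  obtain ⟨n₀, hn₀⟩ := Filter.eventually_atTop.1
    ((tendsto_const_div_atTop_nhds_zero_nat r).eventually_lt_const hδ)
  exact ⟨max 1 n₀, le_max_left _ _, fun n hn => hn₀ n (le_of_max_le_right hn)⟩

theorem arc_formal_chains_general {X : Type*} [MetricSpace X] {D : Set X} {r : ℝ} (hr : 0 < r)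
    {f : ℝ → X} (hD : f '' Icc 0 r ⊆ closure D) (hf : ContinuousOn f (Icc 0 r))
    (hinj : InjOn f (Icc 0 r)) {ε : ℝ} (hε : 0 < ε) :
    ∃ n₀ : ℕ, 1 ≤ n₀ ∧ ∀ n : ℕ, n₀ ≤ n →
      ∃ F : Fin n → Set (X × ℚ),
        (∀ i, (F i).Finite ∧ (F i).Nonempty) ∧
        (∀ i : Fin n, ∀ pr ∈ F i,
          pr.1 ∈ D ∧ 0 < pr.2 ∧ (pr.2 : ℝ) < ε ∧
          (ball pr.1 ((pr.2 : ℝ)) ∩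
            f '' Icc ((i : ℝ) / n * r) (((i : ℝ) + 1) / n * r)).Nonempty) ∧
        (∀ i : Fin n, f '' Icc ((i : ℝ) / n * r) (((i : ℝ) + 1) / n * r) ⊆
          ⋃ pr ∈ F i, ball pr.1 ((pr.2 : ℝ))) ∧
        (∀ i i' : Fin n, ((i : ℕ) + 1 < (i' : ℕ) ∨ (i' : ℕ) + 1 < (i : ℕ)) →
          ∀ pr ∈ F i, ∀ qr ∈ F i',
            dist pr.1 qr.1 > (pr.2 : ℝ) + (qr.2 : ℝ)) ∧
        (∀ i : Fin n, ∀ pr ∈ F i, ∀ qr ∈ F i, ∀ sr ∈ F i,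
          dist pr.1 qr.1 + 2 * (sr.2 : ℝ) < ε) := by
  obtain ⟨δ, hδ, hfδ⟩ := Metric.uniformContinuousOn_iff.1
    (isCompact_Icc.uniformContinuousOn_of_continuous hf) (ε / 2) (half_pos hε)
  obtain ⟨n₀, hn₀, hmesh⟩ := exists_one_le_forall_div_lt r hδ
  refine ⟨n₀, hn₀, fun n hn => ?_⟩
  have hmesh_pos : 0 < r / n := div_pos hr (Nat.cast_pos.2 (hn₀.trans hn))
  obtain ⟨η, hη, hfη⟩ := exists_pos_le_dist_of_injOn isCompact_Icc hf hinj hmesh_pos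
  have hsub (i : Fin n) : subdivisionPiece r n i ⊆ Icc 0 r :=
    subdivisionPiece.subset_Icc hr.le i.isLt
  refine exists_formal_ball_covers (K := fun i : Fin n => f '' subdivisionPiece r n i)
    (fun i => isCompact_Icc.image_of_continuousOn (hf.mono (hsub i)))
    (fun i => (subdivisionPiece.nonempty hr.le).image f)
    (fun i => (image_mono (hsub i)).trans hD) hη ?_ (half_lt_self hε) ?_
  · rintro i j hij _ ⟨s, hs, rfl⟩ _ ⟨t, ht, rfl⟩
    refine hfη s (hsub i hs) t (hsub j ht) (hij.elim ?_ ?_)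
    · exact fun h => subdivisionPiece.le_dist hr.le h hs ht
    · exact fun h => (subdivisionPiece.le_dist hr.le h ht hs).trans_eq (dist_comm t s)
  · rintro i _ ⟨s, hs, rfl⟩ _ ⟨t, ht, rfl⟩
    exact (hfδ s (hsub i hs) t (hsub i ht)
      ((subdivisionPiece.dist_le hs ht).trans_lt (hmesh n hn))).le

/-- **Proposition (chains along an arc).** Let `f` be a continuous injection on
`[0,r]` and `ε > 0`. Then there is `n₀ ≥ 1` such that for each `n ≥ n₀` there are
finite nonempty families `F₀, …, F_{n-1}` of rational balls centered at points of
the dense sequence with radii `< ε` such that: (1) `F_i` covers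
`f([ (i/n)r, ((i+1)/n)r ])` and each of its balls meets this set; (2) balls of
`F_i` and `F_{i'}` are formally disjoint whenever `|i - i'| > 1`; (3) the formal
diameter of each `F_i` is `< ε`. -/
theorem arc_formal_chains {X : Type*} [MetricSpace X] (α : ℕ → X)
    (hα : DenseRange α) (r : ℝ) (hr : 0 < r) (f : ℝ → X)
    (hf : ContinuousOn f (Icc 0 r)) (hinj : InjOn f (Icc 0 r))
    (ε : ℝ) (hε : 0 < ε) :
    ∃ n₀ : ℕ, 1 ≤ n₀ ∧ ∀ n : ℕ, n₀ ≤ n →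
      ∃ F : Fin n → Set (X × ℚ),
        (∀ i, (F i).Finite ∧ (F i).Nonempty) ∧
        (∀ i : Fin n, ∀ pr ∈ F i,
          pr.1 ∈ range α ∧ 0 < pr.2 ∧ (pr.2 : ℝ) < ε ∧
          (ball pr.1 ((pr.2 : ℝ)) ∩
            f '' Icc ((i : ℝ) / n * r) (((i : ℝ) + 1) / n * r)).Nonempty) ∧
        (∀ i : Fin n, f '' Icc ((i : ℝ) / n * r) (((i : ℝ) + 1) / n * r) ⊆
          ⋃ pr ∈ F i, ball pr.1 ((pr.2 : ℝ))) ∧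
        (∀ i i' : Fin n, ((i : ℕ) + 1 < (i' : ℕ) ∨ (i' : ℕ) + 1 < (i : ℕ)) →
          ∀ pr ∈ F i, ∀ qr ∈ F i',
            dist pr.1 qr.1 > (pr.2 : ℝ) + (qr.2 : ℝ)) ∧
        (∀ i : Fin n, ∀ pr ∈ F i, ∀ qr ∈ F i, ∀ sr ∈ F i,
          dist pr.1 qr.1 + 2 * (sr.2 : ℝ) < ε) :=
  arc_formal_chains_general hr (fun x _ => hα x) hf hinj hε
end
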